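/- arXiv:1603.00103 — 3 statements merged into one kernel-verified Lean document; each statement's English description precedes it below -/
import Mathlib

section
/- Let I = [i_1, …, i_d] be a word with letters in {1, …, r} and let ξ ∈ V satisfy ⟨w_m(ε), ξ⟩ ≠ 0 for every ε ∈ {0,1}^d and every 1 ≤ m ≤ d. Define a relation on {0,1}^d by: ε → ε' if and only if ε and ε' differ in exactly one position m and ⟨w_m(ε), ξ⟩ > 0 (the ascending orientation of the edges of the graph Γ_I). Then the resulting directed graph is acyclic: there is no sequence ε^0 → ε^1 → ⋯ → ε^k with k ≥ 1 and ε^k = ε^0; equivalently, the transitive closure of the relation → is irreflexive. -/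
open scoped RealInnerProductSpace

variable {V : Type*} [NormedAddCommGroup V] [InnerProductSpace ℝ V]

/-- The reflection determined by a (nonzero) vector `β`. -/
noncomputable def reflVec (β v : V) : V := v - ((2 * ⟪v, β⟫) / ⟪β, β⟫) • β

/-- `s_β^b`: the reflection if `b = true`, the identity otherwise. -/
noncomputable def reflPow (b : Bool) (β v : V) : V := if b then reflVec β v else v

/-- The weight at position `m` of the fixed point `ε` of the Bott–Samelson space of the
word `i : Fin d → Fin r`:  `w_m(ε) = s_{i_d}^{ε_d} ∘ ⋯ ∘ s_{i_m}^{ε_m} (α_{i_m})`. -/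
noncomputable def bsWeight {r d : ℕ} (α : Fin r → V) (i : Fin d → Fin r)
    (ε : Fin d → Bool) (m : Fin d) : V :=
  ((List.finRange d).filter (fun k => decide (m ≤ k))).foldl
    (fun v k => reflPow (ε k) (α (i k)) v) (α (i m))

/-- The ascending-edge relation on the vertices of the graph `Γ_I` determined by a
polarizing vector `ξ`: `ε → ε'` iff they differ in exactly one position `m` and
`⟨w_m(ε), ξ⟩ > 0`. -/
noncomputable def Ascends {r d : ℕ} (α : Fin r → V) (i : Fin d → Fin r) (ξ : V)
    (ε ε' : Fin d → Bool) : Prop :=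
  ∃ m : Fin d, ε m ≠ ε' m ∧ (∀ k, k ≠ m → ε k = ε' k) ∧ 0 < ⟪bsWeight α i ε m, ξ⟫

/-! Record for each vertex `ε` the heights `⟪w_m(ε), ξ⟫`. The weight `w_m(ε)` only depends on the
letters `ε_k` with `k ≥ m`, and flipping `ε_m` negates it, because the innermost reflection sends
`α_{i_m}` to `-α_{i_m}`. Along an ascending edge at position `m` the heights at positions above `m`
are thus unchanged, while the height at `m` drops from a positive number to its opposite: the vector
of heights strictly decreases in the colexicographic order. -/

theorem irrefl_transGen_of_apply_lt {X P : Type*} [Preorder P] {R : X → X → Prop} (f : X → P)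
    (h : ∀ x y, R x y → f y < f x) : Std.Irrefl (Relation.TransGen R) := by
  have transGen_le : Relation.TransGen R ≤ fun x y => f y < f x :=
    have : IsTrans X fun x y => f y < f x := ⟨fun _ _ _ hxy hyz => hyz.trans hxy⟩
    Relation.transGen_minimal h
  exact ⟨fun x hx => lt_irrefl _ (transGen_le x x hx)⟩

theorem filter_le_eq_cons_filter_lt {ι : Type*} [Preorder ι] [DecidableLE ι] [DecidableLT ι]
    {m : ι} {l : List ι} (hl : l.SortedLT) (hm : m ∈ l) :
    l.filter (m ≤ ·) = m :: l.filter (m < ·) := by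
  obtain ⟨below, above, rfl⟩ := List.append_of_mem hm
  have hlt := hl.pairwise
  simp only [List.pairwise_append, List.pairwise_cons, List.mem_cons, forall_eq_or_imp] at hlt
  obtain ⟨-, ⟨lt_above, -⟩, below_lt⟩ := hlt
  have filter_le_below : below.filter (m ≤ ·) = [] := by
    simpa using fun k hk => (below_lt k hk).1.not_ge
  have filter_lt_below : below.filter (m < ·) = [] := by
    simpa using fun k hk => (below_lt k hk).1.not_gt
  have filter_le_above : above.filter (m ≤ ·) = above := by
    simpa using fun k hk => (lt_above k hk).le
  have filter_lt_above : above.filter (m < ·) = above := by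
    simpa using lt_above
  simp [*]

/-- At `β = 0` both sides are `v`: the quotient in `reflVec` is multiplied by the zero vector. -/
theorem reflVec_eq_reflection (β v : V) : reflVec β v = (ℝ ∙ β)ᗮ.reflection v := by
  simp [reflVec, Submodule.reflection_orthogonal_apply, Submodule.reflection_singleton_apply,
    real_inner_comm, mul_div_assoc, mul_smul, ofNat_smul_eq_nsmul]

theorem reflVec_neg (β v : V) : reflVec β (-v) = -reflVec β v := by
  simp only [reflVec_eq_reflection, map_neg]

theorem reflVec_self (β : V) : reflVec β β = -β := by
  rw [reflVec_eq_reflection, Submodule.reflection_orthogonalComplement_singleton_eq_neg]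

theorem reflPow_neg (b : Bool) (β v : V) : reflPow b β (-v) = -reflPow b β v := by
  cases b <;> simp [reflPow, reflVec_neg]

theorem reflPow_not_self (b : Bool) (β : V) : reflPow (!b) β β = -reflPow b β β := by
  cases b <;> simp [reflPow, reflVec_self]

section Weights

variable {r d : ℕ} (α : Fin r → V) (i : Fin d → Fin r) {ε ε' : Fin d → Bool} {m : Fin d}

theorem bsWeight_congr (h : ∀ k, m ≤ k → ε k = ε' k) : bsWeight α i ε m = bsWeight α i ε' m :=
  List.foldl_ext _ _ _ fun v k hk => by rw [h k (by simpa using hk)]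

theorem bsWeight_eq_foldl_reflPow_self (ε : Fin d → Bool) (m : Fin d) :
    bsWeight α i ε m = ((List.finRange d).filter (m < ·)).foldl
      (fun v k => reflPow (ε k) (α (i k)) v) (reflPow (ε m) (α (i m)) (α (i m))) := by
  rw [bsWeight, filter_le_eq_cons_filter_lt (List.sortedLT_finRange d) (List.mem_finRange m),
    List.foldl_cons]

theorem foldl_reflPow_neg (ε : Fin d → Bool) (l : List (Fin d)) (v : V) :
    l.foldl (fun v k => reflPow (ε k) (α (i k)) v) (-v) =
      -l.foldl (fun v k => reflPow (ε k) (α (i k)) v) v :=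
  List.foldl_hom Neg.neg fun v k => reflPow_neg (ε k) (α (i k)) v

theorem bsWeight_eq_neg_of_ne (hm : ε m ≠ ε' m) (h : ∀ k, m < k → ε k = ε' k) :
    bsWeight α i ε' m = -bsWeight α i ε m := by
  have flip : ε' m = !ε m := Bool.eq_not_of_ne hm.symm
  rw [bsWeight_eq_foldl_reflPow_self, bsWeight_eq_foldl_reflPow_self, flip, reflPow_not_self,
    ← foldl_reflPow_neg]
  exact List.foldl_ext _ _ _ fun v k hk => by rw [h k (by simpa using hk)]

/-- The heights `⟪w_m(ε), ξ⟫` of the weights at the vertex `ε`. They are compared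
colexicographically, the last position being the most significant, since `w_m(ε)` depends on the
positions from `m` onwards. -/
noncomputable def weightHeights (ξ : V) (ε : Fin d → Bool) : Colex (Fin d → ℝ) :=
  toColex fun m => ⟪bsWeight α i ε m, ξ⟫

theorem weightHeights_lt_of_ascends {ξ : V} (h : Ascends α i ξ ε ε') :
    weightHeights α i ξ ε' < weightHeights α i ξ ε := by
  obtain ⟨m, ne_at_m, eq_off_m, height_pos⟩ := h
  have heights_above (k : Fin d) (hk : m < k) : ⟪bsWeight α i ε' k, ξ⟫ = ⟪bsWeight α i ε k, ξ⟫ := by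
    rw [bsWeight_congr α i fun l hl => eq_off_m l (hk.trans_le hl).ne']
  have height_flip : ⟪bsWeight α i ε' m, ξ⟫ = -⟪bsWeight α i ε m, ξ⟫ := by
    rw [bsWeight_eq_neg_of_ne α i ne_at_m fun k hk => eq_off_m k hk.ne', inner_neg_left]
  have height_drop : ⟪bsWeight α i ε' m, ξ⟫ < ⟪bsWeight α i ε m, ξ⟫ := by linarith
  exact ⟨m, heights_above, height_drop⟩

theorem bs_ascending_orientation_acyclic_general (ξ : V) :
    Std.Irrefl (Relation.TransGen (Ascends α i ξ)) :=
  irrefl_transGen_of_apply_lt (weightHeights α i ξ)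
    fun _ _ => weightHeights_lt_of_ascends α i

end Weights

/-- For a polarizing vector `ξ`, orienting all edges of `Γ_I` as ascending edges yields an
acyclic directed graph: the transitive closure of the ascending-edge relation is
irreflexive. -/
theorem bs_ascending_orientation_acyclic {r d : ℕ} (α : Fin r → V) (hα : ∀ k, α k ≠ 0)
    (hli : LinearIndependent ℝ α) (i : Fin d → Fin r) (ξ : V)
    (hξ : ∀ (ε : Fin d → Bool) (m : Fin d), ⟪bsWeight α i ε m, ξ⟫ ≠ 0) :
    Irreflexive (Relation.TransGen (Ascends α i ξ)) :=
  (bs_ascending_orientation_acyclic_general α i ξ).irrefl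
end

section
/- Let I = [i_1, …, i_d] be a word with letters in {1, …, r}, let j ∈ {1, …, r}, and let I' = [i_1, …, i_d, j]. Let {A_J}_{J ∈ T} be a finite family of elements of A(Γ_I) and let a_{J,0}, a_{J,1} ∈ S for each J ∈ T. Define η : {0,1}^{d+1} → S by η(ε, 0) = Σ_{J ∈ T} a_{J,0}·A_J(ε) and η(ε, 1) = Σ_{J ∈ T} a_{J,1}·s_j(A_J(ε)). Then η ∈ A(Γ_{I'}) if and only if for every ε ∈ {0,1}^d the polynomial x_j divides Σ_{J ∈ T} (a_{J,1} − a_{J,0})·A_J(ε). -/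
/-!
Modulo `x_j` the map `s_j` is the identity, and `s_j` is an involution, so an edge condition
twisted by `s_j` on a function `p` is the untwisted condition on `s_j ∘ p`. Splitting the cube
`{0,1}^{d+1}` along its last coordinate, a function on it is therefore an assignment for
`Γ_{[I,j]}` exactly when its restriction `f₀` to the face `0` and the composite `s_j ∘ f₁` with its
restriction to the face `1` are assignments for `Γ_I`, and `x_j ∣ f₁ - f₀` pointwise. For the
function `η` the two faces are `S`-linear combinations of assignments (on the face `1` because
`s_j (a · s_j A) = s_j a · A`), and the condition on `f₁ - f₀` can be read modulo `x_j`.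
-/

open MvPolynomial

/-- The `ℝ`-algebra automorphism `s_j` of `S = ℝ[x_1, …, x_r]` determined by
`s_j(x_i) = x_i - c_{ji}·x_j`. -/
noncomputable def sRefl {r : ℕ} (c : Fin r → Fin r → ℝ) (j : Fin r) :
    MvPolynomial (Fin r) ℝ →ₐ[ℝ] MvPolynomial (Fin r) ℝ :=
  aeval (fun i => X i - C (c j i) * X j)

/-- `s_j^b`: `s_j` if `b = true`, the identity otherwise. -/
noncomputable def sReflPow {r : ℕ} (c : Fin r → Fin r → ℝ) (b : Bool) (j : Fin r)
    (p : MvPolynomial (Fin r) ℝ) : MvPolynomial (Fin r) ℝ :=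
  if b then sRefl c j p else p

/-- The weight-polynomial at position `m` of the vertex `ε` of the graph `Γ_I` for the
word `i : Fin d → Fin r`:  `w_m(ε) = s_{i_d}^{ε_d} ∘ ⋯ ∘ s_{i_m}^{ε_m}(α_{i_m})`, where
`α_i = x_i`. -/
noncomputable def bsWeightP {r : ℕ} (c : Fin r → Fin r → ℝ) {d : ℕ} (i : Fin d → Fin r)
    (ε : Fin d → Bool) (m : Fin d) : MvPolynomial (Fin r) ℝ :=
  ((List.finRange d).filter (fun k => decide (m ≤ k))).foldl
    (fun p k => sReflPow c (ε k) (i k) p) (X (i m))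

/-- An assignment for the graph `Γ_I`: a map `f : {0,1}^d → S` such that `w_m(ε)` divides
`f(ε) - f(ε')` for every pair of vertices `ε, ε'` differing in exactly the position `m`. -/
def IsAssignment {r : ℕ} (c : Fin r → Fin r → ℝ) {d : ℕ} (i : Fin d → Fin r)
    (f : (Fin d → Bool) → MvPolynomial (Fin r) ℝ) : Prop :=
  ∀ ε ε' : Fin d → Bool, ∀ m : Fin d,
    ε m ≠ ε' m → (∀ k, k ≠ m → ε k = ε' k) → bsWeightP c i ε m ∣ f ε - f ε'

theorem forall_fin_snoc_pi {n : ℕ} {α : Fin (n + 1) → Sort*} {P : (∀ k, α k) → Prop} :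
    (∀ x, P x) ↔
      ∀ (v : ∀ k : Fin n, α k.castSucc) (a : α (Fin.last n)), P (Fin.snoc v a) :=
  ⟨fun h _ _ => h _, fun h x => Fin.snocCases h x⟩

theorem dvd_algHom_sub_algHom {R A σ : Type*} [CommRing R] [CommRing A] [Algebra R A]
    {φ ψ : MvPolynomial σ R →ₐ[R] A} {a : A} (h : ∀ i, a ∣ φ (X i) - ψ (X i))
    (p : MvPolynomial σ R) : a ∣ φ p - ψ p := by
  have heq : (Ideal.Quotient.mkₐ R (Ideal.span {a})).comp φ =
      (Ideal.Quotient.mkₐ R (Ideal.span {a})).comp ψ :=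
    algHom_ext fun i => Ideal.Quotient.eq.2 (Ideal.mem_span_singleton.2 (h i))
  exact Ideal.mem_span_singleton.1 (Ideal.Quotient.eq.1 (DFunLike.congr_fun heq p))

section Reflection

variable {r : ℕ} (c : Fin r → Fin r → ℝ) (j : Fin r)

@[simp]
theorem sRefl_X (k : Fin r) : sRefl c j (X k) = X k - C (c j k) * X j :=
  aeval_X _ k

@[simp]
theorem sReflPow_false (p : MvPolynomial (Fin r) ℝ) : sReflPow c false j p = p :=
  rfl

@[simp]
theorem sReflPow_true (p : MvPolynomial (Fin r) ℝ) : sReflPow c true j p = sRefl c j p :=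
  rfl

theorem X_dvd_sRefl_sub_self (p : MvPolynomial (Fin r) ℝ) : X j ∣ sRefl c j p - p :=
  dvd_algHom_sub_algHom (ψ := AlgHom.id ℝ _) (fun k => by simp) p

theorem X_dvd_sum_sRefl_sub_sum_iff {T : Type*} (t : Finset T)
    (B a₀ a₁ : T → MvPolynomial (Fin r) ℝ) :
    X j ∣ ∑ J ∈ t, a₁ J * sRefl c j (B J) - ∑ J ∈ t, a₀ J * B J ↔
      X j ∣ ∑ J ∈ t, (a₁ J - a₀ J) * B J := by
  apply dvd_iff_dvd_of_dvd_sub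
  have hdiff : ∑ J ∈ t, a₁ J * sRefl c j (B J) - ∑ J ∈ t, a₀ J * B J -
      ∑ J ∈ t, (a₁ J - a₀ J) * B J = ∑ J ∈ t, a₁ J * (sRefl c j (B J) - B J) := by
    simp only [← Finset.sum_sub_distrib]
    exact Finset.sum_congr rfl fun J _ => by ring
  rw [hdiff]
  exact Finset.dvd_sum fun J _ => (X_dvd_sRefl_sub_self c j (B J)).mul_left _

variable {c j}

theorem sRefl_X_self (hj : c j j = 2) : sRefl c j (X j) = -X j := by
  rw [sRefl_X, hj, map_ofNat]
  ring

theorem sRefl_involutive (hj : c j j = 2) : Function.Involutive (sRefl c j) := by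
  have hcomp : (sRefl c j).comp (sRefl c j) = AlgHom.id ℝ _ :=
    algHom_ext fun k => by
      rw [AlgHom.comp_apply, sRefl_X, map_sub, map_mul, sRefl_X_self hj, sRefl_X,
        algHom_C, algebraMap_eq, AlgHom.id_apply]
      ring
  exact DFunLike.congr_fun hcomp

theorem sRefl_dvd_iff (hj : c j j = 2) {p q : MvPolynomial (Fin r) ℝ} :
    sRefl c j p ∣ q ↔ p ∣ sRefl c j q :=
  ⟨fun h => sRefl_involutive hj p ▸ map_dvd (sRefl c j) h,
    fun h => sRefl_involutive hj q ▸ map_dvd (sRefl c j) h⟩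

end Reflection

section Assignment

variable {r d : ℕ} (c : Fin r → Fin r → ℝ) (i : Fin d → Fin r)

theorem bsWeightP_snoc_castSucc (j : Fin r) (ε : Fin d → Bool) (b : Bool) (m : Fin d) :
    bsWeightP c (Fin.snoc i j : Fin (d + 1) → Fin r) (Fin.snoc ε b : Fin (d + 1) → Bool)
      m.castSucc = sReflPow c b j (bsWeightP c i ε m) := by
  simp [bsWeightP, List.finRange_succ_last, List.filter_map, List.foldl_map,
    Function.comp_def, Fin.le_last]

theorem bsWeightP_snoc_last (j : Fin r) (ε : Fin d → Bool) (b : Bool) :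
    bsWeightP c (Fin.snoc i j : Fin (d + 1) → Fin r) (Fin.snoc ε b : Fin (d + 1) → Bool)
      (Fin.last d) = sReflPow c b j (X j) := by
  simp [bsWeightP, List.finRange_succ_last, List.filter_map, Function.comp_def]

theorem isAssignment_iff_update {f : (Fin d → Bool) → MvPolynomial (Fin r) ℝ} :
    IsAssignment c i f ↔
      ∀ ε m, bsWeightP c i ε m ∣ f ε - f (Function.update ε m (!ε m)) := by
  refine ⟨fun hf ε m => hf _ _ m (by simp) fun k hk => by simp [hk], fun hf ε ε' m hm hne => ?_⟩
  have hε' : ε' = Function.update ε m (!ε m) :=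
    Function.eq_update_iff.2 ⟨Bool.eq_not.2 hm.symm, fun k hk => (hne k hk).symm⟩
  exact hε' ▸ hf ε m

/-- The `S`-module `A(Γ_I)` of assignments, as a submodule of all maps `{0,1}^d → S`; used to form
`S`-linear combinations of assignments. -/
def assignments :
    Submodule (MvPolynomial (Fin r) ℝ) ((Fin d → Bool) → MvPolynomial (Fin r) ℝ) where
  carrier := {f | IsAssignment c i f}
  zero_mem' := fun _ _ _ _ _ => by simp
  add_mem' := fun {f g} hf hg ε ε' m hm hne => by
    rw [Pi.add_apply, Pi.add_apply, add_sub_add_comm]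
    exact dvd_add (hf ε ε' m hm hne) (hg ε ε' m hm hne)
  smul_mem' := fun a f hf ε ε' m hm hne => by
    rw [Pi.smul_apply, Pi.smul_apply, ← smul_sub]
    exact (hf ε ε' m hm hne).mul_left a

variable {c i}

theorem IsAssignment.sum_mul {T : Type*} {t : Finset T}
    {A : T → (Fin d → Bool) → MvPolynomial (Fin r) ℝ} (hA : ∀ J ∈ t, IsAssignment c i (A J))
    (a : T → MvPolynomial (Fin r) ℝ) : IsAssignment c i fun ε => ∑ J ∈ t, a J * A J ε := by
  have hmem : ∑ J ∈ t, a J • A J ∈ assignments c i := Submodule.sum_smul_mem _ _ hA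
  have heq : (fun ε => ∑ J ∈ t, a J * A J ε) = ∑ J ∈ t, a J • A J := by
    ext1 ε
    simp
  exact heq ▸ hmem

theorem bsWeightP_snoc_last_dvd_iff {j : Fin r} (hj : c j j = 2) {ε : Fin d → Bool} {b : Bool}
    {p : MvPolynomial (Fin r) ℝ} :
    bsWeightP c (Fin.snoc i j : Fin (d + 1) → Fin r) (Fin.snoc ε b : Fin (d + 1) → Bool)
      (Fin.last d) ∣ p ↔ X j ∣ p := by
  rw [bsWeightP_snoc_last]
  cases b with
  | false => rw [sReflPow_false]
  | true => rw [sReflPow_true, sRefl_X_self hj, neg_dvd]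

theorem isAssignment_snoc_iff {j : Fin r} (hj : c j j = 2)
    {f : (Fin (d + 1) → Bool) → MvPolynomial (Fin r) ℝ} :
    IsAssignment c (Fin.snoc i j) f ↔
      IsAssignment c i (fun ε => f (Fin.snoc ε false)) ∧
      IsAssignment c i (fun ε => sRefl c j (f (Fin.snoc ε true))) ∧
      ∀ ε, X j ∣ f (Fin.snoc ε true) - f (Fin.snoc ε false) := by
  have hswap (ε : Fin d → Bool) :
      X j ∣ f (Fin.snoc ε false) - f (Fin.snoc ε true) ↔
        X j ∣ f (Fin.snoc ε true) - f (Fin.snoc ε false) :=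
    dvd_sub_comm
  simp only [isAssignment_iff_update, forall_fin_snoc_pi, Bool.forall_bool, Fin.forall_fin_succ',
    Fin.snoc_castSucc, Fin.snoc_last, ← Fin.snoc_update, Fin.update_snoc_last, Bool.not_false,
    Bool.not_true, bsWeightP_snoc_castSucc, sReflPow_false, sReflPow_true, sRefl_dvd_iff hj,
    map_sub, bsWeightP_snoc_last_dvd_iff hj, hswap, forall_and]
  tauto

end Assignment

/-- Let `{A_J}` be a finite family of assignments for `Γ_I`, and define
`η(ε,0) = Σ a_{J,0}·A_J(ε)` and `η(ε,1) = Σ a_{J,1}·s_j(A_J(ε))`.  Then `η` is an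
assignment for `Γ_{[I,j]}` if and only if `x_j` divides `Σ (a_{J,1} - a_{J,0})·A_J(ε)`
for every vertex `ε` of `Γ_I`. -/
theorem assignment_extension_iff {r : ℕ} (c : Fin r → Fin r → ℝ)
    (hc : ∀ j, c j j = 2) {d : ℕ} (i : Fin d → Fin r) (j : Fin r)
    {T : Type*} [Fintype T]
    (A : T → (Fin d → Bool) → MvPolynomial (Fin r) ℝ)
    (hA : ∀ J, IsAssignment c i (A J))
    (a₀ a₁ : T → MvPolynomial (Fin r) ℝ) :
    IsAssignment c (Fin.snoc i j)
      (fun εh =>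
        if εh (Fin.last d) then
          ∑ J, a₁ J * sRefl c j (A J fun k => εh k.castSucc)
        else
          ∑ J, a₀ J * A J fun k => εh k.castSucc) ↔
      ∀ ε : Fin d → Bool, X j ∣ ∑ J, (a₁ J - a₀ J) * A J ε := by
  have hface₀ : IsAssignment c i fun ε => ∑ J, a₀ J * A J ε :=
    IsAssignment.sum_mul (fun J _ => hA J) a₀
  have hface₁ : IsAssignment c i fun ε => sRefl c j (∑ J, a₁ J * sRefl c j (A J ε)) := by
    simp only [map_sum, map_mul, sRefl_involutive (hc j) _]
    exact IsAssignment.sum_mul (fun J _ => hA J) fun J => sRefl c j (a₁ J)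
  rw [isAssignment_snoc_iff (hc j)]
  simp only [Fin.snoc_last, Fin.snoc_castSucc, Bool.false_eq_true, if_false, if_true, hface₀,
    hface₁, true_and, X_dvd_sum_sRefl_sub_sum_iff]
end

section
/- The S-module A(Γ_{[2,1,2]}) is a free S-module of rank 8, with basis the eight columns of the following 8×8 matrix, whose rows list values at the vertices (000, 200, 010, 210, 002, 202, 012, 212) in this order: [[1,0,0,0,0,0,0,0], [1, x_2, 0, 0, 0, 0, 0, 0], [1, 0, x_1, 0, 0, 0, 0, 0], [1, x_1 + x_2, x_1, x_1(x_1 + x_2), 0, 0, 0, 0], [1, 0, 0, 0, x_2, 0, 0, 0], [1, −x_2, 0, 0, x_2, −x_2², 0, x_1 x_2], [1, 0, x_1 + x_2, 0, x_2, 0, x_2(x_1 + x_2), 0], [1, x_1, x_1 + x_2, x_1(x_1 + x_2), x_2, x_1 x_2, x_2(x_1 + x_2), x_1 x_2]]. That is, each column is an assignment for Γ_{[2,1,2]}, the columns are S-linearly independent, and every assignment is an S-linear combination of them. -/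
open MvPolynomial

/-- The polynomial ring `S = ℝ[x_1, x_2]`. -/
noncomputable abbrev S2 : Type := MvPolynomial (Fin 2) ℝ

/-- `x_1`. -/
noncomputable def x₁ : S2 := X 0
/-- `x_2`. -/
noncomputable def x₂ : S2 := X 1

/-- Vertices of the graph `Γ_{[2,1,2]}`: triples `(ε₁, ε₂, ε₃)`, written as subwords
`000 = (0,0,0)`, `200 = (1,0,0)`, `010 = (0,1,0)`, `210 = (1,1,0)`, `002 = (0,0,1)`,
`202 = (1,0,1)`, `012 = (0,1,1)`, `212 = (1,1,1)`. -/
abbrev V3 : Type := Bool × Bool × Bool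

/-- Label of an edge of `Γ_{[2,1,2]}` whose endpoints differ at position 1:
`s₂^{ε₃} s₁^{ε₂}(α₂)`, i.e. `x₂`, `x₁ + x₂`, `−x₂`, `x₁` as `(ε₂, ε₃)` runs over
`(0,0)`, `(1,0)`, `(0,1)`, `(1,1)`. -/
noncomputable def lab1 (e₂ e₃ : Bool) : S2 :=
  if e₃ then (if e₂ then x₁ else -x₂) else (if e₂ then x₁ + x₂ else x₂)

/-- Label of an edge of `Γ_{[2,1,2]}` whose endpoints differ at position 2:
`s₂^{ε₃}(α₁)`, i.e. `x₁` if `ε₃ = 0` and `x₁ + x₂` if `ε₃ = 1`. -/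
noncomputable def lab2 (e₃ : Bool) : S2 := if e₃ then x₁ + x₂ else x₁

/-- An assignment for the graph `Γ_{[2,1,2]}` in type `A_2`: a map `f : {0,1}³ → S` such
that the label of each edge divides the difference of the values of `f` at its two
endpoints (edges whose endpoints differ at position 3 are labeled `α₂ = x₂`). -/
def IsAsgn212 (f : V3 → S2) : Prop :=
  (∀ e₂ e₃ : Bool, lab1 e₂ e₃ ∣ f (false, e₂, e₃) - f (true, e₂, e₃)) ∧
  (∀ e₁ e₃ : Bool, lab2 e₃ ∣ f (e₁, false, e₃) - f (e₁, true, e₃)) ∧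
  (∀ e₁ e₂ : Bool, x₂ ∣ f (e₁, e₂, false) - f (e₁, e₂, true))

/-- Index of a vertex of `Γ_{[2,1,2]}` in the order
`000, 200, 010, 210, 002, 202, 012, 212`. -/
def vIdx : V3 → Fin 8 := fun v =>
  (if v.1 then 1 else 0) + (if v.2.1 then 2 else 0) + (if v.2.2 then 4 else 0)

/-- The `8×8` matrix whose rows list the values of the eight basis assignments at the
vertices `000, 200, 010, 210, 002, 202, 012, 212` (in this order). -/
noncomputable def M212 : Matrix (Fin 8) (Fin 8) S2 :=
  !![1, 0, 0, 0, 0, 0, 0, 0;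
     1, x₂, 0, 0, 0, 0, 0, 0;
     1, 0, x₁, 0, 0, 0, 0, 0;
     1, x₁ + x₂, x₁, x₁ * (x₁ + x₂), 0, 0, 0, 0;
     1, 0, 0, 0, x₂, 0, 0, 0;
     1, -x₂, 0, 0, x₂, -x₂ ^ 2, 0, x₁ * x₂;
     1, 0, x₁ + x₂, 0, x₂, 0, x₂ * (x₁ + x₂), 0;
     1, x₁, x₁ + x₂, x₁ * (x₁ + x₂), x₂, x₁ * x₂, x₂ * (x₁ + x₂), x₁ * x₂]

/-- The `k`-th basis assignment: the `k`-th column of `M212`, viewed as a map on the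
vertices of `Γ_{[2,1,2]}`. -/
noncomputable def B212 (k : Fin 8) : V3 → S2 := fun v => M212 (vIdx v) k

/-! An assignment is constant modulo `x₁`, `x₁ + x₂` and `x₂` on the connected components of the
subgraphs of edges labelled by that prime up to sign, of which there are `5`, `5` and `3`. Row
operations within components show that the determinant of eight assignments is divisible by
`x₁ ^ 3 * (x₁ + x₂) ^ 3 * x₂ ^ 5`. Up to sign this is the determinant of the eight columns, so, as
in Saito's criterion for free arrangements, Cramer's rule expresses every assignment as a
combination of them with coefficients in `S`. -/

section Determinant

variable {n R : Type*} [Fintype n] [DecidableEq n] [CommRing R]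

theorem pow_card_dvd_det_of_dvd_sub {p : R} {s : Finset n} {M : Matrix n n R}
    (h : ∀ i ∈ s, ∃ i' ∉ s, ∀ j, p ∣ M i j - M i' j) : p ^ s.card ∣ M.det := by
  induction s using Finset.induction_on generalizing M with
  | empty => simp
  | insert i s hi ih =>
    obtain ⟨i', hi', hdvd⟩ := h i (Finset.mem_insert_self i s)
    rw [Finset.mem_insert, not_or] at hi'
    choose v hv using hdvd
    have hdet : M.det = p * (M.updateRow i v).det := by
      rw [← Matrix.det_updateRow_smul, ← Matrix.det_updateRow_add_smul_self M (Ne.symm hi'.1) (-1)]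
      congr 2
      funext j
      simp [← hv, sub_eq_add_neg]
    rw [Finset.card_insert_of_notMem hi, pow_succ', hdet]
    refine mul_dvd_mul_left p (ih fun k hk => ?_)
    obtain ⟨k', hk', hkk'⟩ := h k (Finset.mem_insert_of_mem hk)
    rw [Finset.mem_insert, not_or] at hk'
    refine ⟨k', hk'.2, fun j => ?_⟩
    rw [Matrix.updateRow_ne (ne_of_mem_of_not_mem hk hi), Matrix.updateRow_ne hk'.1]
    exact hkk' j

theorem mem_span_range_col_of_det_dvd_cramer {M : Matrix n n R} (hM : M.Nonsingular) {f : n → R}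
    (hdvd : ∀ j, M.det ∣ M.cramer f j) : f ∈ Submodule.span R (Set.range M.col) := by
  choose a ha using hdvd
  rw [← Matrix.range_mulVecLin]
  refine ⟨a, funext fun i => ?_⟩
  refine (mul_cancel_left_mem_nonZeroDivisors
    (Matrix.nonsingular_iff_det_mem_nonZeroDivisors.1 hM)).1 ?_
  have hcramer : M.cramer f = M.det • a := funext ha
  have hmul : M.det • M.mulVec a = M.det • f := by
    rw [← Matrix.mulVec_smul, ← hcramer, Matrix.mulVec_cramer]
  exact congrFun hmul i

theorem subset_span_range_col_of_det_dvd_det {A : Set (n → R)} {M : Matrix n n R}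
    (hM : M.Nonsingular) (hA : ∀ j, M.col j ∈ A)
    (hdvd : ∀ N : Matrix n n R, (∀ j, N.col j ∈ A) → M.det ∣ N.det) :
    A ⊆ Submodule.span R (Set.range M.col) := by
  refine fun f hf => mem_span_range_col_of_det_dvd_cramer hM fun j => ?_
  rw [Matrix.cramer_apply]
  refine hdvd _ fun k => ?_
  obtain rfl | hk := eq_or_ne k j
  · have hcol : (M.updateCol k f).col k = f := funext fun i => Matrix.updateCol_self
    rwa [hcol]
  · have hcol : (M.updateCol j f).col k = M.col k := funext fun i => Matrix.updateCol_ne hk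
    rw [hcol]
    exact hA k

end Determinant

/-- The discriminant of `Γ_{[2,1,2]}`: the exponent of a positive root `β` is the number of vertices
minus the number of connected components of the subgraph of edges labelled `±β`. -/
noncomputable def disc212 : S2 := x₁ ^ 3 * (x₁ + x₂) ^ 3 * x₂ ^ 5

theorem isRelPrime_x₁_x₂ : IsRelPrime x₁ x₂ :=
  (show Prime x₁ from X_prime).irreducible.isRelPrime_iff_not_dvd.2 fun h => by
    simpa using X_dvd_X.1 h

theorem isRelPrime_x₁_x₁_add_x₂ : IsRelPrime x₁ (x₁ + x₂) := by
  simpa [add_comm] using isRelPrime_x₁_x₂.add_mul_left_right 1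

theorem isRelPrime_x₁_add_x₂_x₂ : IsRelPrime (x₁ + x₂) x₂ := by
  simpa using isRelPrime_x₁_x₂.add_mul_left_left 1

theorem disc212_ne_zero : disc212 ≠ 0 := by
  have hx₁ : Prime x₁ := X_prime
  have hx₂ : x₂ ≠ 0 := X_ne_zero 1
  have hadd : x₁ + x₂ ≠ 0 := fun h =>
    hx₁.not_isUnit (isRelPrime_zero_right.1 (h ▸ isRelPrime_x₁_x₁_add_x₂))
  exact mul_ne_zero (mul_ne_zero (pow_ne_zero 3 hx₁.ne_zero) (pow_ne_zero 3 hadd))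
    (pow_ne_zero 5 hx₂)

section AssignmentMatrix

variable {N : Matrix V3 V3 S2}

theorem x₁_pow_dvd_det (hN : ∀ w, IsAsgn212 (N.col w)) : x₁ ^ 3 ∣ N.det := by
  refine pow_card_dvd_det_of_dvd_sub
    (s := {(false, true, true), (false, false, false), (true, false, false)}) ?_
  simp only [Finset.forall_mem_insert, Finset.mem_singleton, forall_eq]
  exact ⟨⟨(true, true, true), by decide, fun w => (hN w).1 true true⟩,
    ⟨(false, true, false), by decide, fun w => (hN w).2.1 false false⟩,
    ⟨(true, true, false), by decide, fun w => (hN w).2.1 true false⟩⟩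

theorem x₁_add_x₂_pow_dvd_det (hN : ∀ w, IsAsgn212 (N.col w)) : (x₁ + x₂) ^ 3 ∣ N.det := by
  refine pow_card_dvd_det_of_dvd_sub
    (s := {(false, true, false), (false, false, true), (true, false, true)}) ?_
  simp only [Finset.forall_mem_insert, Finset.mem_singleton, forall_eq]
  exact ⟨⟨(true, true, false), by decide, fun w => (hN w).1 true false⟩,
    ⟨(false, true, true), by decide, fun w => (hN w).2.1 false true⟩,
    ⟨(true, true, true), by decide, fun w => (hN w).2.1 true true⟩⟩

theorem x₂_pow_dvd_det (hN : ∀ w, IsAsgn212 (N.col w)) : x₂ ^ 5 ∣ N.det := by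
  have hpos₁ (w : V3) : x₂ ∣ N (false, false, true) w - N (true, false, true) w :=
    neg_dvd.1 ((hN w).1 false true)
  have hpos₃ (e₁ e₂ : Bool) (w : V3) : x₂ ∣ N (e₁, e₂, false) w - N (e₁, e₂, true) w :=
    (hN w).2.2 e₁ e₂
  refine pow_card_dvd_det_of_dvd_sub
    (s := {(false, false, true), (false, false, false), (true, false, false),
      (false, true, false), (true, true, false)}) ?_
  simp only [Finset.forall_mem_insert, Finset.mem_singleton, forall_eq]
  exact ⟨⟨(true, false, true), by decide, hpos₁⟩,
    ⟨(true, false, true), by decide, fun w => by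
      simpa using dvd_add (hpos₃ false false w) (hpos₁ w)⟩,
    ⟨(true, false, true), by decide, hpos₃ true false⟩,
    ⟨(false, true, true), by decide, hpos₃ false true⟩,
    ⟨(true, true, true), by decide, hpos₃ true true⟩⟩

theorem disc212_dvd_det (hN : ∀ w, IsAsgn212 (N.col w)) : disc212 ∣ N.det :=
  (isRelPrime_x₁_x₂.pow.mul_left isRelPrime_x₁_add_x₂_x₂.pow).mul_dvd
    (isRelPrime_x₁_x₁_add_x₂.pow.mul_dvd (x₁_pow_dvd_det hN) (x₁_add_x₂_pow_dvd_det hN))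
    (x₂_pow_dvd_det hN)

end AssignmentMatrix

theorem det_M212 : M212.det = -disc212 := by
  -- Only the entry `x₁ * x₂` in row 5, column 7 lies above the diagonal; `x₁` times column 5
  -- cancels `x₂` times it.
  let T := M212.updateCol 7 (x₁ • M212.col 5 + x₂ • M212.col 7)
  have hcancel : -(x₁ * x₂ ^ 2) + x₂ * (x₁ * x₂) = 0 := by ring
  have hT : T.IsLowerTriangular := by
    intro i j hij
    change i < j at hij
    revert i j
    simp [T, Fin.forall_fin_succ, M212, Matrix.updateCol_apply, hcancel]
  have hdiag : T.det = 1 * x₂ * x₁ * (x₁ * (x₁ + x₂)) * x₂ * -x₂ ^ 2 * (x₂ * (x₁ + x₂)) *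
      (x₁ * (x₁ * x₂) + x₂ * (x₁ * x₂)) := by
    rw [Matrix.det_of_isLowerTriangular T hT, Fin.prod_univ_eight]
    simp [T, M212]
  have hcol : T.det = x₂ * M212.det := by
    have hrepeat : (M212.updateCol 7 (M212.col 5)).det = 0 :=
      Matrix.det_updateCol_eq_zero (by decide)
    have hself : M212.updateCol 7 (M212.col 7) = M212 := Matrix.updateCol_eq_self M212 7
    simp only [T, Matrix.det_updateCol_add, Matrix.det_updateCol_smul, hrepeat, hself, mul_zero,
      zero_add]
  have hx₂ : x₂ ≠ 0 := X_ne_zero 1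
  refine mul_left_cancel₀ hx₂ ?_
  rw [← hcol, hdiag, disc212]
  ring

theorem isAsgn212_B212 (k : Fin 8) : IsAsgn212 (B212 k) := by
  have hneg : x₁ + x₂ ∣ -x₂ - x₁ := ⟨-1, by ring⟩
  have hneg' : x₁ + x₂ ∣ -x₂ + -x₁ := ⟨-1, by ring⟩
  have hsq : x₁ + x₂ ∣ -x₂ ^ 2 - x₁ * x₂ := ⟨-x₂, by ring⟩
  refine ⟨?_, ?_, ?_⟩
  · rintro (_ | _) (_ | _) <;> fin_cases k <;> simp [B212, M212, vIdx, lab1, hneg']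
  · rintro (_ | _) (_ | _) <;> fin_cases k <;>
      simp [B212, M212, vIdx, lab2, hneg, hneg', hsq]
  · rintro (_ | _) (_ | _) <;> fin_cases k <;> simp [B212, M212, vIdx]

/-- The numbering `vIdx` of the vertices as an equivalence, used to index the columns of `M212`
by vertices. -/
noncomputable def vertexEquiv : V3 ≃ Fin 8 := Equiv.ofBijective vIdx (by decide)

/-- The `S`-module `A(Γ_{[2,1,2]})` of assignments is a free `S`-module of rank 8 with
basis the eight columns of `M212`: each column is an assignment, the columns are
`S`-linearly independent, and every assignment is an `S`-linear combination of them. -/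
theorem asgn212_free_basis :
    (∀ k : Fin 8, IsAsgn212 (B212 k)) ∧
    LinearIndependent S2 B212 ∧
    (∀ f : V3 → S2, IsAsgn212 f →
      ∃ a : Fin 8 → S2, f = fun v => ∑ k, a k * B212 k v) := by
  let M : Matrix V3 V3 S2 := M212.submatrix vertexEquiv vertexEquiv
  have hcol : M.col = B212 ∘ vertexEquiv := rfl
  have hdet : M.det = -disc212 := by rw [Matrix.det_submatrix_equiv_self, det_M212]
  have hM : M.Nonsingular := by
    rw [Matrix.nonsingular_iff_det_ne_zero, hdet]
    exact neg_ne_zero.2 disc212_ne_zero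
  refine ⟨isAsgn212_B212, ?_, fun f hf => ?_⟩
  · rw [← linearIndependent_equiv vertexEquiv, ← hcol]
    exact hM.linearIndependent_col
  · have hspan : f ∈ Submodule.span S2 (Set.range B212) := by
      rw [← EquivLike.range_comp B212 vertexEquiv, ← hcol]
      exact subset_span_range_col_of_det_dvd_det (A := {g | IsAsgn212 g}) hM
        (fun w => isAsgn212_B212 (vertexEquiv w))
        (fun N hN => by rw [hdet, neg_dvd]; exact disc212_dvd_det hN) hf
    obtain ⟨a, ha⟩ := (Submodule.mem_span_range_iff_exists_fun S2).1 hspan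
    refine ⟨a, funext fun v => ?_⟩
    simp [← ha]
end
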